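/- arXiv:2205.06211 — 2 statements merged into one kernel-verified Lean document; each statement's English description precedes it below -/
import Mathlib

section
/- Let ω be a modulus of continuity of order n ∈ ℕ and let D ⊆ ℝ^d be a domain. Then there exists a constant C = C(n,d,ω) such that for every f ∈ L¹_loc(D) with ‖f‖_{ω,D} < ∞ and every cube Q ⊂ D there exists a polynomial P ∈ 𝒫_n with ess sup_{x ∈ Q} |f(x) − P(x)| ≤ C·ω(ℓ(Q))·‖f‖_{ω,D}. -/
open MeasureTheory Filter Set Metric
open scoped ENNReal Topology InnerProductSpace

noncomputable section

/-- The axis-parallel closed cube in `ℝ^d` with center `x₀` and side length `l`. -/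
def cube {d : ℕ} (x₀ : EuclideanSpace ℝ (Fin d)) (l : ℝ) : Set (EuclideanSpace ℝ (Fin d)) :=
  {x | ∀ i, |x i - x₀ i| ≤ l / 2}

/-- `𝒫_n`: functions on `ℝ^d` given by polynomials of total degree at most `n`. -/
def PolyLE (d n : ℕ) : Set (EuclideanSpace ℝ (Fin d) → ℝ) :=
  {P | ∃ p : MvPolynomial (Fin d) ℝ, p.totalDegree ≤ n ∧
    ∀ x, MvPolynomial.eval (fun i => x i) p = P x}

/-- The Campanato-type Zygmund seminorm `‖f‖_{ω,D}` (valued in `ℝ≥0∞`). -/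
def zygSeminorm {d : ℕ} (ω : ℝ → ℝ) (n : ℕ) (D : Set (EuclideanSpace ℝ (Fin d)))
    (f : EuclideanSpace ℝ (Fin d) → ℝ) : ℝ≥0∞ :=
  ⨆ (x₀ : EuclideanSpace ℝ (Fin d)) (l : ℝ) (_ : 0 < l) (_ : cube x₀ l ⊆ D),
    ⨅ (P : EuclideanSpace ℝ (Fin d) → ℝ) (_ : P ∈ PolyLE d n),
      (ENNReal.ofReal (ω l * l ^ d))⁻¹ * ∫⁻ x in cube x₀ l, ENNReal.ofReal |f x - P x|

/-- The `L¹(D)` norm (valued in `ℝ≥0∞`). -/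
def l1Norm {d : ℕ} (D : Set (EuclideanSpace ℝ (Fin d)))
    (f : EuclideanSpace ℝ (Fin d) → ℝ) : ℝ≥0∞ :=
  ∫⁻ x in D, ENNReal.ofReal |f x|

/-- The two regularity conditions of order `m` for a modulus of continuity:
`ω(t)/t^q` almost decreasing for some `m ≤ q < m+1`, and `ω(t)/t^r` almost
increasing for some `m-1 < r < m`. -/
def ModulusConds (ω : ℝ → ℝ) (m : ℕ) : Prop :=
  (∃ q : ℝ, (m : ℝ) ≤ q ∧ q < (m : ℝ) + 1 ∧ ∃ C : ℝ, 0 < C ∧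
      ∀ s t : ℝ, 1 < s → 0 < t → ω (s * t) ≤ C * s ^ q * ω t) ∧
  (∃ r : ℝ, (m : ℝ) - 1 < r ∧ r < (m : ℝ) ∧ ∃ C : ℝ, 0 < C ∧
      ∀ s t : ℝ, 0 < s → s < 1 → 0 < t → ω (s * t) ≤ C * s ^ r * ω t)

/-- `ω` is a modulus of continuity of order `n`: continuous, increasing, `ω(0)=0`,
nonnegative, and `n` is the smallest positive integer satisfying the two
regularity conditions. -/
structure IsModulusOfOrder (ω : ℝ → ℝ) (n : ℕ) : Prop where
  continuousOn : ContinuousOn ω (Set.Ici 0)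
  monotoneOn : MonotoneOn ω (Set.Ici 0)
  nonneg : ∀ t, 0 ≤ t → 0 ≤ ω t
  map_zero : ω 0 = 0
  npos : 0 < n
  conds : ModulusConds ω n
  minimal : ∀ m : ℕ, 0 < m → ModulusConds ω m → n ≤ m

/-- `ξ(r) = ∫_r^1 ω(t) t^{-n-1} dt`. -/
def xi (ω : ℝ → ℝ) (n : ℕ) (r : ℝ) : ℝ :=
  ∫ t in Set.Ioc r 1, ω t / t ^ (n + 1)

/-- The associated modulus of continuity `ω̃(x) = ω(x)/max{1, ξ(x)}`. -/
def omegaTilde (ω : ℝ → ℝ) (n : ℕ) (x : ℝ) : ℝ :=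
  ω x / max 1 (xi ω n x)

/-- `D ⊂ ℝ^d` is a bounded Lipschitz domain: it is open, connected, bounded, and near
every boundary point, after a rigid motion, it coincides inside an `R`-window with the
region above the graph of a Lipschitz function (with Lipschitz constant at most `δ`). -/
def IsLipschitzDomain {d : ℕ} (D : Set (EuclideanSpace ℝ (Fin d))) : Prop :=
  IsOpen D ∧ IsConnected D ∧ Bornology.IsBounded D ∧
  ∃ δ R : ℝ, 0 < δ ∧ 0 < R ∧
    ∀ a ∈ frontier D,
      ∃ (g : EuclideanSpace ℝ (Fin d) ≃ᵢ EuclideanSpace ℝ (Fin d)) (j : Fin d)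
        (A : EuclideanSpace ℝ (Fin d) → ℝ),
        g a = 0 ∧
        LipschitzWith (Real.toNNReal δ) A ∧
        (∀ x y : EuclideanSpace ℝ (Fin d), (∀ i, i ≠ j → x i = y i) → A x = A y) ∧
        (g '' D) ∩ cube 0 R = {x ∈ cube (0 : EuclideanSpace ℝ (Fin d)) R | A x < x j}

/-- `Ω` is the density of a `C^k`-smooth homogeneous Calderón–Zygmund kernel:
homogeneous of degree `0`, `C^k` away from the origin, with zero mean on the
unit sphere. -/
structure IsCZDensity (d : ℕ) (k : ℕ∞) (Ω : EuclideanSpace ℝ (Fin d) → ℝ) : Prop where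
  homog : ∀ c : ℝ, 0 < c → ∀ x : EuclideanSpace ℝ (Fin d), Ω (c • x) = Ω x
  smooth : ContDiffOn ℝ k Ω {x : EuclideanSpace ℝ (Fin d) | x ≠ 0}
  meanZero : ∫ x : Metric.sphere (0 : EuclideanSpace ℝ (Fin d)) 1,
      Ω x ∂((volume : Measure (EuclideanSpace ℝ (Fin d))).toSphere) = 0

/-- `g = T_D f`: `g` vanishes off `D` and, for a.e. `y ∈ D`, `g y` is the principal
value `lim_{ε→0+} ∫_{x ∈ D, |y-x|>ε} f(x) K(y-x) dx` (here `f` is implicitly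
multiplied by `χ_D`). -/
def IsRestrictedCZ {d : ℕ} (D : Set (EuclideanSpace ℝ (Fin d)))
    (K : EuclideanSpace ℝ (Fin d) → ℝ) (f g : EuclideanSpace ℝ (Fin d) → ℝ) : Prop :=
  (∀ y, y ∉ D → g y = 0) ∧
  ∀ᵐ y ∂(volume.restrict D),
    Tendsto (fun ε : ℝ => ∫ x in {x ∈ D | ε < dist y x}, f x * K (y - x))
      (𝓝[>] (0 : ℝ)) (𝓝 (g y))

/-- `P` is a polynomial of near best approximation (with constant `C₀`) for `f`
on the cube with center `x₀` and side length `l`. -/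
def IsNearBestApprox {d : ℕ} (ω : ℝ → ℝ) (n : ℕ) (D : Set (EuclideanSpace ℝ (Fin d)))
    (f : EuclideanSpace ℝ (Fin d) → ℝ) (C₀ : ℝ) (x₀ : EuclideanSpace ℝ (Fin d)) (l : ℝ)
    (P : EuclideanSpace ℝ (Fin d) → ℝ) : Prop :=
  P ∈ PolyLE d n ∧
    (ENNReal.ofReal (l ^ d))⁻¹ * ∫⁻ x in cube x₀ l, ENNReal.ofReal |f x - P x| ≤
      ENNReal.ofReal (C₀ * ω l) * zygSeminorm ω n D f


lemma polyLE_sub {d n : ℕ} {P Q : EuclideanSpace ℝ (Fin d) → ℝ} (hP : P ∈ PolyLE d n)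
    (hQ : Q ∈ PolyLE d n) : (fun x => P x - Q x) ∈ PolyLE d n := by
  obtain ⟨p, hp, hp'⟩ := hP
  obtain ⟨q, hq, hq'⟩ := hQ
  refine ⟨p - q, (MvPolynomial.totalDegree_sub _ _).trans (max_le hp hq), fun x => ?_⟩
  rw [map_sub, hp', hq']

lemma polyEval_continuous {d : ℕ} (p : MvPolynomial (Fin d) ℝ) :
    Continuous (fun x : EuclideanSpace ℝ (Fin d) => MvPolynomial.eval (fun i => x i) p) := by
  have := MvPolynomial.continuous_eval p
  exact this.comp (continuous_pi fun i => by fun_prop)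

lemma polyLE_continuous {d n : ℕ} {P : EuclideanSpace ℝ (Fin d) → ℝ} (hP : P ∈ PolyLE d n) :
    Continuous P := by
  obtain ⟨p, hp, hp'⟩ := hP
  have : P = fun x : EuclideanSpace ℝ (Fin d) => MvPolynomial.eval (fun i => x i) p :=
    funext fun x => (hp' x).symm
  rw [this]
  exact polyEval_continuous p

lemma polyLE_comp {d n : ℕ} {P : EuclideanSpace ℝ (Fin d) → ℝ} (hP : P ∈ PolyLE d n)
    (x₀ : EuclideanSpace ℝ (Fin d)) (l : ℝ) : (fun x => P (x₀ + l • x)) ∈ PolyLE d n := by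
  obtain ⟨p, hp, hp'⟩ := hP
  let g : Fin d → MvPolynomial (Fin d) ℝ := fun i =>
    MvPolynomial.C (x₀ i) + MvPolynomial.C l * MvPolynomial.X i
  have hg : ∀ i, (g i).totalDegree ≤ 1 := by
    intro i
    refine (MvPolynomial.totalDegree_add _ _).trans (max_le ?_ ?_)
    · simp
    · refine (MvPolynomial.totalDegree_mul _ _).trans ?_
      simp
  refine ⟨MvPolynomial.aeval g p, ?_, fun x => ?_⟩
  · rw [MvPolynomial.aeval_def, MvPolynomial.eval₂_eq]
    refine MvPolynomial.totalDegree_finsetSum_le fun s hs => ?_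
    refine (MvPolynomial.totalDegree_mul _ _).trans ?_
    have h1 : (algebraMap ℝ (MvPolynomial (Fin d) ℝ) (MvPolynomial.coeff s p)).totalDegree = 0 :=
      MvPolynomial.totalDegree_C _
    rw [h1, zero_add]
    refine (MvPolynomial.totalDegree_finsetProd _ _).trans ?_
    refine le_trans ?_ ((MvPolynomial.le_totalDegree hs).trans hp)
    refine Finset.sum_le_sum fun i _ => ?_
    refine (MvPolynomial.totalDegree_pow _ _).trans ?_
    simpa using Nat.mul_le_mul_left (s i) (hg i)
  · show _ = P (x₀ + l • x)
    rw [← hp', MvPolynomial.aeval_def]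
    have := MvPolynomial.eval₂_comp_left (MvPolynomial.eval (fun i => x i))
      (algebraMap ℝ (MvPolynomial (Fin d) ℝ)) g p
    rw [this, MvPolynomial.eval, MvPolynomial.coe_eval₂Hom]
    congr 1
    · ext r; simp [MvPolynomial.algebraMap_eq]
    · ext i; simp [g]

lemma cube_eq_closed {d : ℕ} (x₀ : EuclideanSpace ℝ (Fin d)) (l : ℝ) : IsClosed (cube x₀ l) := by
  unfold cube
  simp only [ofPred_forall]
  exact isClosed_iInter fun i => isClosed_le (by fun_prop) continuous_const

lemma cube_eq_preimage {d : ℕ} (x₀ : EuclideanSpace ℝ (Fin d)) (l : ℝ) :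
    cube x₀ l = (PiLp.homeomorph 2 (fun _ : Fin d => ℝ)) ⁻¹'
      (Set.Icc (fun i => x₀ i - l / 2) (fun i => x₀ i + l / 2)) := by
  ext x
  simp only [cube, mem_ofPred_eq, mem_preimage, mem_Icc, Pi.le_def, abs_le]
  constructor
  · intro h
    exact ⟨fun i => by have := (h i).1; show _ ≤ x i; linarith,
      fun i => by have := (h i).2; show x i ≤ _; linarith⟩
  · rintro ⟨h1, h2⟩ i
    have h1 : _ ≤ x i := h1 i
    have h2 : x i ≤ _ := h2 i
    constructor <;> linarith

lemma cube_compact {d : ℕ} (x₀ : EuclideanSpace ℝ (Fin d)) (l : ℝ) : IsCompact (cube x₀ l) := by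
  rw [cube_eq_preimage, Homeomorph.isCompact_preimage]
  exact isCompact_Icc

lemma cube_meas {d : ℕ} (x₀ : EuclideanSpace ℝ (Fin d)) (l : ℝ) : MeasurableSet (cube x₀ l) :=
  (cube_eq_closed x₀ l).measurableSet

/-- The open cube. -/
def ocube {d : ℕ} (x₀ : EuclideanSpace ℝ (Fin d)) (l : ℝ) : Set (EuclideanSpace ℝ (Fin d)) :=
  {x | ∀ i, |x i - x₀ i| < l / 2}

lemma ocube_open {d : ℕ} (x₀ : EuclideanSpace ℝ (Fin d)) (l : ℝ) : IsOpen (ocube x₀ l) := by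
  unfold ocube
  simp only [ofPred_forall]
  exact isOpen_iInter_of_finite fun i => isOpen_lt (by fun_prop) continuous_const

lemma poly_eq_zero_of_ae {d : ℕ} (p : MvPolynomial (Fin d) ℝ) (x₀ : EuclideanSpace ℝ (Fin d))
    {l : ℝ} (hl : 0 < l)
    (h : ∀ᵐ x ∂(volume.restrict (cube x₀ l)), MvPolynomial.eval (fun i => x i) p = 0) : p = 0 := by
  have h2 : ∀ᵐ x ∂(volume.restrict (ocube x₀ l)), MvPolynomial.eval (fun i => x i) p = 0 :=
    ae_restrict_of_ae_restrict_of_subset (fun x hx i => (hx i).le) h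
  have h3 : EqOn (fun x : EuclideanSpace ℝ (Fin d) => MvPolynomial.eval (fun i => x i) p)
      (fun _ => 0) (ocube x₀ l) :=
    Measure.eqOn_open_of_ae_eq h2 (ocube_open x₀ l) (polyEval_continuous p).continuousOn
      continuousOn_const
  refine MvPolynomial.funext_set (fun i => Set.Ioo (x₀ i - l/2) (x₀ i + l/2))
    (fun i => Set.Ioo_infinite (by linarith)) fun x hx => ?_
  have := @h3 (WithLp.toLp 2 x) (fun i => by
    have := hx i (mem_univ i)
    rw [abs_lt]
    constructor
    · have := this.1; show _ < x i - _; linarith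
    · have := this.2; show x i - _ < _; linarith)
  simpa using this

lemma memLp_cont {d : ℕ} {g : EuclideanSpace ℝ (Fin d) → ℝ} (hg : Continuous g)
    (x₀ : EuclideanSpace ℝ (Fin d)) (l : ℝ) : MemLp g 1 (volume.restrict (cube x₀ l)) := by
  rw [memLp_one_iff_integrable]
  exact (hg.continuousOn.integrableOn_compact (cube_compact x₀ l))

/-- Polynomials of degree at most `n` mapped into `L¹` of a cube. -/
def polyToLp (d n : ℕ) (x₀ : EuclideanSpace ℝ (Fin d)) (l : ℝ) :
    MvPolynomial.restrictTotalDegree (Fin d) ℝ n →ₗ[ℝ] Lp ℝ 1 (volume.restrict (cube x₀ l)) where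
  toFun p := (memLp_cont (polyEval_continuous p.1) x₀ l).toLp
  map_add' p q := by
    rw [← MemLp.toLp_add]
    congr 1
    ext x; simp
  map_smul' c p := by
    rw [RingHom.id_apply, ← MemLp.toLp_const_smul]
    congr 1
    ext x; simp

lemma polyToLp_inj (d n : ℕ) (x₀ : EuclideanSpace ℝ (Fin d)) {l : ℝ} (hl : 0 < l) :
    Function.Injective (polyToLp d n x₀ l) := by
  rw [injective_iff_map_eq_zero]
  intro p hp
  have h1 := (memLp_cont (polyEval_continuous p.1) x₀ l).coeFn_toLp
  have h2 := Lp.coeFn_zero ℝ 1 (volume.restrict (cube x₀ l))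
  have h3 : (memLp_cont (polyEval_continuous p.1) x₀ l).toLp = 0 := hp
  rw [h3] at h1
  have : p.1 = 0 := by
    apply poly_eq_zero_of_ae p.1 x₀ hl
    filter_upwards [h1, h2] with x a b
    rw [← a, b]; rfl
  exact Subtype.ext this

lemma enorm_toLp_one {d : ℕ} {g : EuclideanSpace ℝ (Fin d) → ℝ} (x₀ : EuclideanSpace ℝ (Fin d))
    (l : ℝ) (hg : MemLp g 1 (volume.restrict (cube x₀ l))) :
    ENNReal.ofReal ‖hg.toLp‖ = ∫⁻ x in cube x₀ l, ENNReal.ofReal |g x| := by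
  rw [Lp.norm_toLp, ENNReal.ofReal_toReal hg.eLpNorm_ne_top, eLpNorm_one_eq_lintegral_enorm]
  simp [Real.enorm_eq_ofReal_abs]

lemma unit_bound (d n : ℕ) : ∃ K : ℝ, 0 < K ∧ ∀ P ∈ PolyLE d n,
    ∀ x ∈ cube (0 : EuclideanSpace ℝ (Fin d)) 1, ENNReal.ofReal |P x| ≤
      ENNReal.ofReal K * ∫⁻ y in cube (0 : EuclideanSpace ℝ (Fin d)) 1, ENNReal.ofReal |P y| := by
  let Q := cube (0 : EuclideanSpace ℝ (Fin d)) 1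
  have : CompactSpace Q := isCompact_iff_compactSpace.1 (cube_compact _ _)
  let S : MvPolynomial.restrictTotalDegree (Fin d) ℝ n →ₗ[ℝ] C(Q, ℝ) :=
    { toFun := fun p => ⟨fun x => MvPolynomial.eval (fun i => x.1 i) p.1,
        (polyEval_continuous p.1).comp continuous_subtype_val⟩
      map_add' := fun p q => by ext x; simp
      map_smul' := fun c p => by ext x; simp }
  let e := LinearEquiv.ofInjective _ (polyToLp_inj d n 0 one_pos)
  have : FiniteDimensional ℝ (LinearMap.range (polyToLp d n 0 1)) := inferInstance
  let G := LinearMap.toContinuousLinearMap (S ∘ₗ e.symm.toLinearMap)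
  refine ⟨‖G‖ + 1, by positivity, ?_⟩
  rintro P ⟨p, hp, hp'⟩ x hx
  let v : MvPolynomial.restrictTotalDegree (Fin d) ℝ n :=
    ⟨p, (MvPolynomial.mem_restrictTotalDegree _ _ _).2 hp⟩
  have h1 : |P x| ≤ ‖S v‖ := by
    have := (S v).norm_coe_le_norm ⟨x, hx⟩
    rw [← hp' x, ← Real.norm_eq_abs]
    exact this
  have h2 : G (e v) = S v := by simp [G]
  have h3 : ‖S v‖ ≤ (‖G‖ + 1) * ‖e v‖ := by
    rw [← h2]
    refine (G.le_opNorm _).trans ?_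
    gcongr
    linarith
  have h4 := enorm_toLp_one 0 1 (memLp_cont (polyEval_continuous p) (0 : EuclideanSpace ℝ (Fin d)) 1)
  have h5 : ‖e v‖ = ‖(memLp_cont (polyEval_continuous p) (0 : EuclideanSpace ℝ (Fin d)) 1).toLp‖ :=
    rfl
  have h6 : (fun x : EuclideanSpace ℝ (Fin d) => ENNReal.ofReal |P x|) = fun x =>
      ENNReal.ofReal |MvPolynomial.eval (fun i => x i) p| := by
    ext x; rw [hp']
  rw [h6, ← h4, ← ENNReal.ofReal_mul (by positivity)]
  apply ENNReal.ofReal_le_ofReal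
  rw [← h5]
  exact h1.trans h3

lemma cube_bound (d n : ℕ) : ∃ K : ℝ, 0 < K ∧ ∀ P ∈ PolyLE d n,
    ∀ (x₀ : EuclideanSpace ℝ (Fin d)) (l : ℝ), 0 < l → ∀ x ∈ cube x₀ l, ENNReal.ofReal |P x| ≤
      ENNReal.ofReal (K / l ^ d) * ∫⁻ y in cube x₀ l, ENNReal.ofReal |P y| := by
  obtain ⟨K, hK, h⟩ := unit_bound d n
  refine ⟨K, hK, fun P hP x₀ l hl x hx => ?_⟩
  have h1 := h _ (polyLE_comp hP x₀ l) (l⁻¹ • (x - x₀)) (fun i => by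
    have := hx i
    simp only [PiLp.smul_apply, PiLp.sub_apply, PiLp.zero_apply, smul_eq_mul, sub_zero, abs_mul,
      abs_inv, abs_of_pos hl]
    rw [inv_mul_le_iff₀ hl]; linarith)
  have h2 : x₀ + l • (l⁻¹ • (x - x₀)) = x := by
    rw [smul_smul, mul_inv_cancel₀ hl.ne', one_smul]; abel
  rw [h2] at h1
  refine h1.trans ?_
  have hm : Measurable fun y : EuclideanSpace ℝ (Fin d) => ENNReal.ofReal |P y| :=
    ((polyLE_continuous hP).abs.measurable).ennreal_ofReal
  have h3 : ∫⁻ y in cube (0 : EuclideanSpace ℝ (Fin d)) 1, ENNReal.ofReal |P (x₀ + l • y)|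
      = ENNReal.ofReal (l ^ d)⁻¹ * ∫⁻ y in cube x₀ l, ENNReal.ofReal |P y| := by
    rw [← lintegral_indicator (cube_meas _ _), ← lintegral_indicator (cube_meas _ _)]
    have hm' := hm.indicator (cube_meas x₀ l)
    rw [← lintegral_add_left_eq_self (μ := volume) ((cube x₀ l).indicator _) x₀]
    have h4 := Measure.map_addHaar_smul (volume : Measure (EuclideanSpace ℝ (Fin d))) hl.ne'
    rw [finrank_euclideanSpace_fin, abs_of_pos (by positivity)] at h4
    rw [← smul_eq_mul, ← lintegral_smul_measure, ← h4, lintegral_map (by fun_prop) (by fun_prop)]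
    congr 1
    ext y
    have : y ∈ cube (0 : EuclideanSpace ℝ (Fin d)) 1 ↔ x₀ + l • y ∈ cube x₀ l := by
      simp only [cube, mem_ofPred_eq, PiLp.zero_apply, sub_zero, PiLp.add_apply, PiLp.smul_apply,
        smul_eq_mul, add_sub_cancel_left, abs_mul, abs_of_pos hl]
      refine forall_congr' fun i => ?_
      constructor
      · intro h; nlinarith
      · intro h; by_contra hh; nlinarith
    by_cases hy : y ∈ cube (0 : EuclideanSpace ℝ (Fin d)) 1
    · rw [indicator_of_mem hy, indicator_of_mem (this.1 hy)]
    · rw [indicator_of_notMem hy, indicator_of_notMem (fun h => hy (this.2 h))]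
  rw [h3, ← mul_assoc, ← ENNReal.ofReal_mul hK.le, div_eq_mul_inv]

lemma near_best {d n : ℕ} {ω : ℝ → ℝ} {D : Set (EuclideanSpace ℝ (Fin d))}
    {f : EuclideanSpace ℝ (Fin d) → ℝ} (hS : zygSeminorm ω n D f < ⊤) {A : ℝ}
    (hA : (zygSeminorm ω n D f).toReal < A)
    (x₀ : EuclideanSpace ℝ (Fin d)) {l : ℝ} (hl : 0 < l) (hQ : cube x₀ l ⊆ D) :
    ∃ P ∈ PolyLE d n, ∫⁻ x in cube x₀ l, ENNReal.ofReal |f x - P x| ≤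
      ENNReal.ofReal A * ENNReal.ofReal (ω l * l ^ d) := by
  have h1 : (⨅ (P : EuclideanSpace ℝ (Fin d) → ℝ) (_ : P ∈ PolyLE d n),
      (ENNReal.ofReal (ω l * l ^ d))⁻¹ * ∫⁻ x in cube x₀ l, ENNReal.ofReal |f x - P x|)
      < ENNReal.ofReal A := by
    refine lt_of_le_of_lt ?_ ((ENNReal.lt_ofReal_iff_toReal_lt hS.ne).2 hA)
    unfold zygSeminorm
    exact le_iSup_of_le x₀ (le_iSup_of_le l (le_iSup_of_le hl (le_iSup_of_le hQ le_rfl)))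
  simp only [iInf_lt_iff] at h1
  obtain ⟨P, hP, h⟩ := h1
  refine ⟨P, hP, ?_⟩
  by_cases hc : ENNReal.ofReal (ω l * l ^ d) = 0
  · rw [hc, ENNReal.inv_zero] at h
    by_cases h0 : ∫⁻ x in cube x₀ l, ENNReal.ofReal |f x - P x| = 0
    · rw [h0]; exact zero_le
    · rw [ENNReal.top_mul h0] at h
      exact absurd h not_top_lt
  · rw [mul_comm, ← div_eq_mul_inv] at h
    exact (ENNReal.div_le_iff hc ENNReal.ofReal_ne_top).1 h.le

lemma exact_best {d n : ℕ} {f : EuclideanSpace ℝ (Fin d) → ℝ} (x₀ : EuclideanSpace ℝ (Fin d))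
    (l : ℝ) (hf : IntegrableOn f (cube x₀ l))
    (h : ∀ ε : ℝ, 0 < ε → ∃ P ∈ PolyLE d n, ∫⁻ x in cube x₀ l, ENNReal.ofReal |f x - P x| ≤
      ENNReal.ofReal ε) :
    ∃ P ∈ PolyLE d n, ∫⁻ x in cube x₀ l, ENNReal.ofReal |f x - P x| = 0 := by
  have hf' : MemLp f 1 (volume.restrict (cube x₀ l)) := memLp_one_iff_integrable.2 hf
  have hcl : IsClosed (LinearMap.range (polyToLp d n x₀ l) :
    Set (Lp ℝ 1 (volume.restrict (cube x₀ l)))) := Submodule.closed_of_finiteDimensional _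
  have key : ∀ p : MvPolynomial.restrictTotalDegree (Fin d) ℝ n,
      ENNReal.ofReal ‖hf'.toLp - polyToLp d n x₀ l p‖ =
        ∫⁻ x in cube x₀ l, ENNReal.ofReal |f x - MvPolynomial.eval (fun i => x i) p.1| := by
    intro p
    have := enorm_toLp_one x₀ l (hf'.sub (memLp_cont (polyEval_continuous p.1) x₀ l))
    rw [MemLp.toLp_sub hf' (memLp_cont (polyEval_continuous p.1) x₀ l)] at this
    exact this
  have hmem : hf'.toLp ∈ LinearMap.range (polyToLp d n x₀ l) := by
    rw [← SetLike.mem_coe, ← hcl.closure_eq, Metric.mem_closure_iff]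
    intro ε hε
    obtain ⟨P, ⟨p, hp, hp'⟩, hP⟩ := h (ε / 2) (by positivity)
    refine ⟨_, ⟨⟨p, (MvPolynomial.mem_restrictTotalDegree _ _ _).2 hp⟩, rfl⟩, ?_⟩
    simp only [← hp'] at hP
    rw [dist_eq_norm]
    have := (key ⟨p, (MvPolynomial.mem_restrictTotalDegree _ _ _).2 hp⟩).trans_le hP
    rw [ENNReal.ofReal_le_ofReal_iff (by positivity)] at this
    linarith
  obtain ⟨p, hp⟩ := hmem
  refine ⟨fun x => MvPolynomial.eval (fun i => x i) p.1,
    ⟨p.1, (MvPolynomial.mem_restrictTotalDegree _ _ _).1 p.2, fun x => rfl⟩, ?_⟩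
  rw [← key p, hp]; simp

/-- Every cube has an almost best approximating polynomial. -/
def HasApprox {d : ℕ} (n : ℕ) (ω : ℝ → ℝ) (D : Set (EuclideanSpace ℝ (Fin d)))
    (f : EuclideanSpace ℝ (Fin d) → ℝ) (A : ℝ) : Prop :=
  ∀ (x₀ : EuclideanSpace ℝ (Fin d)) (l : ℝ), 0 < l → cube x₀ l ⊆ D →
    ∃ P ∈ PolyLE d n, ∫⁻ x in cube x₀ l, ENNReal.ofReal |f x - P x| ≤
      ENNReal.ofReal (A * (ω l * l ^ d))

lemma hasApprox {d n : ℕ} {ω : ℝ → ℝ} {D : Set (EuclideanSpace ℝ (Fin d))}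
    {f : EuclideanSpace ℝ (Fin d) → ℝ} (hf : LocallyIntegrableOn f D)
    (hω : ∀ t, 0 ≤ t → 0 ≤ ω t)
    (hS : zygSeminorm ω n D f < ⊤) :
    HasApprox n ω D f (2 * (zygSeminorm ω n D f).toReal) := by
  intro x₀ l hl hQ
  have hint : IntegrableOn f (cube x₀ l) := hf.integrableOn_compact_subset hQ (cube_compact _ _)
  rcases (ENNReal.toReal_nonneg (a := zygSeminorm ω n D f)).eq_or_lt with h0 | h0
  · obtain ⟨P, hP, h⟩ := exact_best (n := n) x₀ l hint (fun ε hε => by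
      have hc : 0 ≤ ω l * l ^ d := mul_nonneg (hω l hl.le) (by positivity)
      obtain ⟨P, hP, h⟩ := near_best hS (A := ε / (ω l * l ^ d + 1))
        (by rw [← h0]; positivity) x₀ hl hQ
      refine ⟨P, hP, h.trans ?_⟩
      rw [← ENNReal.ofReal_mul (by positivity)]
      apply ENNReal.ofReal_le_ofReal
      rw [div_mul_eq_mul_div, div_le_iff₀ (by positivity)]
      nlinarith)
    exact ⟨P, hP, by rw [h]; exact zero_le⟩
  · obtain ⟨P, hP, h⟩ := near_best hS (A := 2 * (zygSeminorm ω n D f).toReal)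
      (by linarith) x₀ hl hQ
    exact ⟨P, hP, by rw [ENNReal.ofReal_mul (by positivity)]; exact h⟩

/-- Center of the dyadic child. -/
def childCenter {d : ℕ} (x₀ : EuclideanSpace ℝ (Fin d)) (l : ℝ) (σ : Fin d → Bool) :
    EuclideanSpace ℝ (Fin d) :=
  WithLp.toLp 2 fun i => x₀ i + if σ i then l / 4 else - (l / 4)

lemma child_subset {d : ℕ} (x₀ : EuclideanSpace ℝ (Fin d)) {l : ℝ} (hl : 0 < l)
    (σ : Fin d → Bool) : cube (childCenter x₀ l σ) (l / 2) ⊆ cube x₀ l := by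
  intro x hx i
  have h : |x i - (x₀ i + if σ i then l / 4 else - (l / 4))| ≤ l / 2 / 2 := hx i
  rw [abs_le] at *
  split_ifs at h <;> constructor <;> linarith [h.1, h.2]

lemma child_cover {d : ℕ} (x₀ : EuclideanSpace ℝ (Fin d)) {l : ℝ} (hl : 0 < l) :
    cube x₀ l ⊆ ⋃ σ : Fin d → Bool, cube (childCenter x₀ l σ) (l / 2) := by
  intro x hx
  rw [mem_iUnion]
  refine ⟨fun i => decide (x₀ i ≤ x i), fun i => ?_⟩
  show |x i - (x₀ i + if decide (x₀ i ≤ x i) = true then l / 4 else - (l / 4))| ≤ l / 2 / 2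
  have h := hx i
  rw [abs_le] at *
  simp only [decide_eq_true_eq]
  split_ifs with hh
  · constructor <;> linarith [h.1, h.2]
  · push Not at hh
    constructor <;> linarith [h.1, h.2]

lemma child_close {d n : ℕ} {ω : ℝ → ℝ} 
    {f : EuclideanSpace ℝ (Fin d) → ℝ} {A K : ℝ} (hA : 0 ≤ A) (hK : 0 < K)
    (hω : ∀ t, 0 ≤ t → 0 ≤ ω t) (hmono : MonotoneOn ω (Set.Ici 0))
    (hKb : ∀ P ∈ PolyLE d n,
      ∀ (x₀ : EuclideanSpace ℝ (Fin d)) (l : ℝ), 0 < l → ∀ x ∈ cube x₀ l, ENNReal.ofReal |P x| ≤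
      ENNReal.ofReal (K / l ^ d) * ∫⁻ y in cube x₀ l, ENNReal.ofReal |P y|)
    (x₀ x₁ : EuclideanSpace ℝ (Fin d)) {l : ℝ} (hl : 0 < l) (hsub : cube x₁ (l / 2) ⊆ cube x₀ l)
    (hf : IntegrableOn f (cube x₀ l))
    {P P₁ : EuclideanSpace ℝ (Fin d) → ℝ} (hP : P ∈ PolyLE d n) (hP₁ : P₁ ∈ PolyLE d n)
    (h : ∫⁻ x in cube x₀ l, ENNReal.ofReal |f x - P x| ≤ ENNReal.ofReal (A * (ω l * l ^ d)))
    (h₁ : ∫⁻ x in cube x₁ (l / 2), ENNReal.ofReal |f x - P₁ x| ≤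
      ENNReal.ofReal (A * (ω (l / 2) * (l / 2) ^ d))) :
    ∀ x ∈ cube x₁ (l / 2), |P₁ x - P x| ≤ K * (2 ^ d + 1) * A * ω l := by
  intro x hx
  have h1 := hKb _ (polyLE_sub hP₁ hP) x₁ (l / 2) (by positivity) x hx
  have hle : ω (l / 2) ≤ ω l := hmono (by simp; positivity) (by simp; positivity) (by linarith)
  have hωl := hω l hl.le
  have hωl2 := hω (l / 2) (by positivity)
  have h2 : ∫⁻ y in cube x₁ (l / 2), ENNReal.ofReal |P₁ y - P y| ≤
      ENNReal.ofReal (A * (ω l * l ^ d)) + ENNReal.ofReal (A * (ω (l / 2) * (l / 2) ^ d)) := by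
    calc ∫⁻ y in cube x₁ (l / 2), ENNReal.ofReal |P₁ y - P y|
      ≤ ∫⁻ y in cube x₁ (l / 2), (ENNReal.ofReal |f y - P y| + ENNReal.ofReal |f y - P₁ y|) := by
          refine lintegral_mono fun y => ?_
          rw [← ENNReal.ofReal_add (abs_nonneg _) (abs_nonneg _)]
          apply ENNReal.ofReal_le_ofReal
          have := abs_sub (f y - P y) (f y - P₁ y)
          rwa [show f y - P y - (f y - P₁ y) = P₁ y - P y by ring] at this
      _ = (∫⁻ y in cube x₁ (l / 2), ENNReal.ofReal |f y - P y|) +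
          ∫⁻ y in cube x₁ (l / 2), ENNReal.ofReal |f y - P₁ y| := by
          apply lintegral_add_left'
          have := (hf.mono_set hsub).aestronglyMeasurable.aemeasurable
          have hPm := (polyLE_continuous hP).measurable
          have h3 : AEMeasurable (fun y => f y - P y) (volume.restrict (cube x₁ (l / 2))) :=
            this.sub hPm.aemeasurable
          exact (measurable_norm.comp_aemeasurable h3).ennreal_ofReal
      _ ≤ _ := add_le_add ((lintegral_mono_set hsub).trans h) h₁
  have h3 := h1.trans (mul_le_mul_right h2 _)
  rw [← ENNReal.ofReal_add (by positivity) (by positivity),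
    ← ENNReal.ofReal_mul (by positivity),
    ENNReal.ofReal_le_ofReal_iff (by positivity)] at h3
  refine h3.trans ?_
  have h4 : K / (l / 2) ^ d * (A * (ω l * l ^ d) + A * (ω (l / 2) * (l / 2) ^ d)) =
      K * A * (2 ^ d * ω l + ω (l / 2)) := by
    rw [div_pow]; field_simp
  rw [h4]
  calc K * A * (2 ^ d * ω l + ω (l / 2)) ≤ K * A * (2 ^ d * ω l + ω l) := by gcongr
    _ = _ := by ring

lemma main_induction {d n : ℕ} {ω : ℝ → ℝ} {D : Set (EuclideanSpace ℝ (Fin d))}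
    {f : EuclideanSpace ℝ (Fin d) → ℝ} {A K : ℝ} (hA : 0 ≤ A) (hK : 0 < K)
    (hω : ∀ t, 0 ≤ t → 0 ≤ ω t) (hmono : MonotoneOn ω (Set.Ici 0))
    (hKb : ∀ P ∈ PolyLE d n,
      ∀ (x₀ : EuclideanSpace ℝ (Fin d)) (l : ℝ), 0 < l → ∀ x ∈ cube x₀ l, ENNReal.ofReal |P x| ≤
      ENNReal.ofReal (K / l ^ d) * ∫⁻ y in cube x₀ l, ENNReal.ofReal |P y|)
    (hf : LocallyIntegrableOn f D) (happ : HasApprox n ω D f A) (k : ℕ) :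
    ∀ (x₀ : EuclideanSpace ℝ (Fin d)) (l : ℝ), 0 < l → cube x₀ l ⊆ D →
      ∀ P ∈ PolyLE d n,
      ∫⁻ x in cube x₀ l, ENNReal.ofReal |f x - P x| ≤ ENNReal.ofReal (A * (ω l * l ^ d)) →
      ∫⁻ x in cube x₀ l, ENNReal.ofReal (|f x - P x| -
        K * (2 ^ d + 1) * A * ∑ j ∈ Finset.range k, ω (l / 2 ^ j)) ≤
        ENNReal.ofReal (A * (ω (l / 2 ^ k) * l ^ d)) := by
  induction k with
  | zero =>
    intro x₀ l hl hQ P hP h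
    simpa using h
  | succ k ih =>
    intro x₀ l hl hQ P hP h
    have hint : IntegrableOn f (cube x₀ l) := hf.integrableOn_compact_subset hQ (cube_compact _ _)
    have hchild : ∀ σ : Fin d → Bool,
        ∫⁻ x in cube (childCenter x₀ l σ) (l / 2), ENNReal.ofReal (|f x - P x| -
        K * (2 ^ d + 1) * A * ∑ j ∈ Finset.range (k + 1), ω (l / 2 ^ j)) ≤
        ENNReal.ofReal (A * (ω (l / 2 ^ (k + 1)) * (l / 2) ^ d)) := by
      intro σ
      have hsub := child_subset x₀ hl σ
      obtain ⟨P₁, hP₁, h₁⟩ := happ (childCenter x₀ l σ) (l / 2) (by positivity) (hsub.trans hQ)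
      have hclose := child_close hA hK hω hmono hKb x₀ _ hl hsub hint hP hP₁ h h₁
      have h2 := ih _ (l / 2) (by positivity) (hsub.trans hQ) P₁ hP₁ h₁
      rw [show l / 2 ^ (k + 1) = l / 2 / 2 ^ k by rw [pow_succ]; field_simp]
      refine le_trans ?_ h2
      refine setLIntegral_mono' (cube_meas _ _) fun x hx => ?_
      apply ENNReal.ofReal_le_ofReal
      have h3 := hclose x hx
      rw [Finset.sum_range_succ']
      have h4 : ∀ j, l / 2 ^ (j + 1) = l / 2 / 2 ^ j := fun j => by rw [pow_succ]; field_simp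
      simp only [h4, pow_zero, div_one]
      have h5 := abs_add_le (f x - P₁ x) (P₁ x - P x)
      rw [sub_add_sub_cancel] at h5
      rw [mul_add]
      linarith
    calc _ ≤ ∫⁻ x in ⋃ σ : Fin d → Bool, cube (childCenter x₀ l σ) (l / 2),
            ENNReal.ofReal (|f x - P x| -
        K * (2 ^ d + 1) * A * ∑ j ∈ Finset.range (k + 1), ω (l / 2 ^ j)) :=
          lintegral_mono_set (child_cover x₀ hl)
      _ ≤ ∑' σ : Fin d → Bool, ∫⁻ x in cube (childCenter x₀ l σ) (l / 2),
            ENNReal.ofReal (|f x - P x| -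
        K * (2 ^ d + 1) * A * ∑ j ∈ Finset.range (k + 1), ω (l / 2 ^ j)) :=
          lintegral_iUnion_le _ _
      _ = ∑ σ : Fin d → Bool, ∫⁻ x in cube (childCenter x₀ l σ) (l / 2),
            ENNReal.ofReal (|f x - P x| -
        K * (2 ^ d + 1) * A * ∑ j ∈ Finset.range (k + 1), ω (l / 2 ^ j)) := tsum_fintype _
      _ ≤ ∑ σ : Fin d → Bool, ENNReal.ofReal (A * (ω (l / 2 ^ (k + 1)) * (l / 2) ^ d)) :=
          Finset.sum_le_sum fun σ _ => hchild σ
      _ = ENNReal.ofReal (A * (ω (l / 2 ^ (k + 1)) * l ^ d)) := by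
          rw [Finset.sum_const, Finset.card_univ, Fintype.card_fun, Fintype.card_bool,
            Fintype.card_fin, ← ENNReal.ofReal_nsmul]
          congr 1
          rw [nsmul_eq_mul, div_pow]
          push_cast
          field_simp

/-- For `f` with finite Zygmund seminorm, on each cube there is a polynomial in `𝒫_n`
which approximates `f` uniformly (a.e.) to within `C ω(ℓ) ‖f‖_{ω,D}`. -/
theorem statement_12 {d : ℕ} (n : ℕ) (ω : ℝ → ℝ) (hω : IsModulusOfOrder ω n) :
    ∃ C : ℝ, 0 < C ∧
      ∀ (D : Set (EuclideanSpace ℝ (Fin d))), IsOpen D → IsConnected D →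
        ∀ f : EuclideanSpace ℝ (Fin d) → ℝ,
          LocallyIntegrableOn f D → zygSeminorm ω n D f < ⊤ →
          ∀ (x₀ : EuclideanSpace ℝ (Fin d)) (l : ℝ), 0 < l → cube x₀ l ⊆ D →
            ∃ P ∈ PolyLE d n,
              ∀ᵐ x ∂(volume.restrict (cube x₀ l)),
                |f x - P x| ≤ C * ω l * (zygSeminorm ω n D f).toReal := by

  obtain ⟨K, hK, hKb⟩ := cube_bound d n
  obtain ⟨r, hr1, -, Cr, hCr, hr⟩ := hω.conds.2
  have hr0 : 0 < r := by
    have : (1 : ℝ) ≤ n := by exact_mod_cast hω.npos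
    linarith
  set ρ : ℝ := (1 / 2 : ℝ) ^ r with hρ
  have hρ0 : 0 < ρ := by positivity
  have hρ1 : ρ < 1 := Real.rpow_lt_one (by norm_num) (by norm_num) hr0
  have hρ2 : 0 < 1 - ρ := by linarith
  have hdecay : ∀ (l : ℝ), 0 < l → ∀ j : ℕ, ω (l / 2 ^ j) ≤ (1 + Cr) * ρ ^ j * ω l := by
    intro l hl j
    have hωl := hω.nonneg l hl.le
    rcases Nat.eq_zero_or_pos j with rfl | hj
    · simp only [pow_zero, div_one, mul_one]
      nlinarith
    · have h1 := hr ((1 / 2) ^ j) l (by positivity)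
        (pow_lt_one₀ (by norm_num) (by norm_num) hj.ne') hl
      have h2 : ((1 / 2 : ℝ) ^ j) ^ r = ρ ^ j := by
        rw [hρ, ← Real.rpow_natCast, ← Real.rpow_natCast, ← Real.rpow_mul (by norm_num),
          ← Real.rpow_mul (by norm_num), mul_comm]
      rw [h2, show (1 / 2 : ℝ) ^ j * l = l / 2 ^ j by rw [div_pow, one_pow]; field_simp] at h1
      refine h1.trans ?_
      gcongr
      linarith
  refine ⟨2 * (K * (2 ^ d + 1) * ((1 + Cr) / (1 - ρ))), by positivity, ?_⟩
  intro D _ _ f hf hS x₀ l hl hQ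
  set S := (zygSeminorm ω n D f).toReal with hSdef
  have hS0 : 0 ≤ S := ENNReal.toReal_nonneg
  have happ := hasApprox hf hω.nonneg hS
  rw [← hSdef] at happ
  obtain ⟨P, hP, h⟩ := happ x₀ l hl hQ
  refine ⟨P, hP, ?_⟩
  have hωl := hω.nonneg l hl.le
  set M := 2 * (K * (2 ^ d + 1) * ((1 + Cr) / (1 - ρ))) * ω l * S with hM
  have hsum : ∀ k, K * (2 ^ d + 1) * (2 * S) * ∑ j ∈ Finset.range k, ω (l / 2 ^ j) ≤ M := by
    intro k
    have h1 : ∑ j ∈ Finset.range k, ω (l / 2 ^ j) ≤ (1 + Cr) / (1 - ρ) * ω l := by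
      calc _ ≤ ∑ j ∈ Finset.range k, (1 + Cr) * ρ ^ j * ω l :=
            Finset.sum_le_sum fun j _ => hdecay l hl j
        _ = (1 + Cr) * (∑ j ∈ Finset.range k, ρ ^ j) * ω l := by
            rw [Finset.mul_sum, Finset.sum_mul]
        _ ≤ (1 + Cr) * (1 - ρ)⁻¹ * ω l := by
            gcongr
            rw [← tsum_geometric_of_lt_one hρ0.le hρ1]
            exact (summable_geometric_of_lt_one hρ0.le hρ1).sum_le_tsum _
              (fun i _ => by positivity)
        _ = _ := by rw [div_eq_mul_inv]
    calc _ ≤ K * (2 ^ d + 1) * (2 * S) * ((1 + Cr) / (1 - ρ) * ω l) := by gcongr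
      _ = M := by rw [hM]; ring
  have hle : ∀ k : ℕ, ∫⁻ x in cube x₀ l, ENNReal.ofReal (|f x - P x| - M) ≤
      ENNReal.ofReal (2 * S * ((1 + Cr) * ρ ^ k * ω l * l ^ d)) := by
    intro k
    refine le_trans ?_ ((main_induction (by positivity) hK hω.nonneg hω.monotoneOn hKb hf happ k
      x₀ l hl hQ P hP h).trans ?_)
    · refine lintegral_mono fun x => ENNReal.ofReal_le_ofReal ?_
      have := hsum k
      linarith
    · apply ENNReal.ofReal_le_ofReal
      have := hdecay l hl k
      gcongr
  have hlim : Tendsto (fun k : ℕ => ENNReal.ofReal (2 * S * ((1 + Cr) * ρ ^ k * ω l * l ^ d)))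
      atTop (𝓝 0) := by
    rw [← ENNReal.ofReal_zero]
    apply ENNReal.tendsto_ofReal
    have := (tendsto_pow_atTop_nhds_zero_of_lt_one hρ0.le hρ1).const_mul
      (2 * S * (1 + Cr) * ω l * l ^ d)
    rw [mul_zero] at this
    refine this.congr fun k => by ring
  have hzero : ∫⁻ x in cube x₀ l, ENNReal.ofReal (|f x - P x| - M) = 0 :=
    le_antisymm (ge_of_tendsto' hlim hle) zero_le
  have hint : IntegrableOn f (cube x₀ l) := hf.integrableOn_compact_subset hQ (cube_compact _ _)
  have hmeas : AEMeasurable (fun x => ENNReal.ofReal (|f x - P x| - M))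
      (volume.restrict (cube x₀ l)) := by
    have h3 : AEMeasurable (fun y => f y - P y) (volume.restrict (cube x₀ l)) :=
      hint.aestronglyMeasurable.aemeasurable.sub (polyLE_continuous hP).measurable.aemeasurable
    exact ((measurable_norm.comp_aemeasurable h3).sub_const M).ennreal_ofReal
  rw [lintegral_eq_zero_iff' hmeas] at hzero
  filter_upwards [hzero] with x hx
  have : ENNReal.ofReal (|f x - P x| - M) = 0 := hx
  rw [ENNReal.ofReal_eq_zero] at this
  linarith

end
end

section
/- Let ω be a modulus of continuity of order n ∈ ℕ and let C₀ > 0. Then there exists a constant C = C(n,d,C₀,ω) such that the following holds. Let f ∈ L¹_loc(ℝ^d) with ‖f‖_{ω,ℝ^d} < ∞, let Q ⊂ ℝ^d be a cube with 0 < ℓ(Q) < 1/2, let t₀ ∈ Q, and let P_Q, P_{2Q} ∈ 𝒫_n be polynomials of near best approximation with constant C₀ for f on Q and on 2Q respectively, written as Taylor expansions P_Q(t) = Σ_{|k|≤n} A_{k,Q}·(t−t₀)^k and P_{2Q}(t) = Σ_{|k|≤n} A_{k,2Q}·(t−t₀)^k with respect to t₀ (k a multi-index). Then |A_{k,2Q}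 − A_{k,Q}| ≤ C·‖f‖_{ω,ℝ^d}·ω(ℓ(Q))·ℓ(Q)^{−|k|} for every multi-index k with 0 ≤ |k| ≤ n. -/
open MeasureTheory Filter Set Metric
open scoped ENNReal Topology InnerProductSpace

noncomputable section

/-- Norm equivalence on polynomials with exponents in `s`, on an open box. -/
theorem aux_box {d : ℕ} (s : Finset (Fin d →₀ ℕ)) (a b : Fin d → ℝ) (hab : ∀ i, a i < b i) :
    ∃ C : ℝ, 0 < C ∧ ∀ c : (Fin d →₀ ℕ) → ℝ, ∀ k ∈ s,
      ENNReal.ofReal |c k| ≤ ENNReal.ofReal C *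
        ∫⁻ x in {x : EuclideanSpace ℝ (Fin d) | ∀ i, x i ∈ Ioo (a i) (b i)},
          ENNReal.ofReal |∑ m ∈ s, c m * ∏ i, x i ^ m i| := by
  set E : Set (EuclideanSpace ℝ (Fin d)) := {x | ∀ i, x i ∈ Ioo (a i) (b i)} with hE
  have hEo : IsOpen E := by
    have : E = ⋂ i, (fun x : EuclideanSpace ℝ (Fin d) => x i) ⁻¹' Ioo (a i) (b i) := by
      ext x; simp [hE]
    rw [this]
    exact isOpen_iInter_of_finite fun i => isOpen_Ioo.preimage (by fun_prop)
  have hcont : ∀ c : s → ℝ, Continuous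
      (fun x : EuclideanSpace ℝ (Fin d) => ∑ m : s, c m * ∏ i, x i ^ m.1 i) := by
    intro c; fun_prop
  have hint : ∀ c : s → ℝ, Integrable
      (fun x : EuclideanSpace ℝ (Fin d) => ∑ m : s, c m * ∏ i, x i ^ m.1 i)
      (volume.restrict E) := by
    intro c
    have hK : IsCompact ((WithLp.toLp 2 : (Fin d → ℝ) → EuclideanSpace ℝ (Fin d)) ''
        (Set.pi univ fun i => Icc (a i) (b i))) :=
      (isCompact_univ_pi fun i => isCompact_Icc).image (PiLp.continuous_toLp 2 _)
    have h1 := (hcont c).continuousOn.integrableOn_compact (μ := volume) hK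
    refine h1.mono_set ?_
    intro x hx
    exact ⟨WithLp.ofLp x, fun i _ => ⟨(hx i).1.le, (hx i).2.le⟩, rfl⟩
  let T : (s → ℝ) →ₗ[ℝ] (EuclideanSpace ℝ (Fin d) →₁[volume.restrict E] ℝ) :=
    { toFun := fun c => (hint c).toL1 _
      map_add' := by
        intro c c'
        rw [← Integrable.toL1_add]
        congr 1
        funext x
        simp [add_mul, Finset.sum_add_distrib]
      map_smul' := by
        intro r c
        simp only [RingHom.id_apply]
        rw [← Integrable.toL1_smul]
        congr 1
        funext x
        simp [mul_assoc, Finset.mul_sum] }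
  have hker : LinearMap.ker T = ⊥ := by
    rw [LinearMap.ker_eq_bot']
    intro c hc
    have h0 : (fun x : EuclideanSpace ℝ (Fin d) => ∑ m : s, c m * ∏ i, x i ^ m.1 i)
        =ᵐ[volume.restrict E] (fun _ => (0:ℝ)) := by
      have hz : (hint c).toL1 _ = (integrable_zero _ ℝ (volume.restrict E)).toL1 _ := by
        rw [Integrable.toL1_zero]; exact hc
      exact (Integrable.toL1_eq_toL1_iff _ _ _ _).1 hz
    have h1 := Measure.eqOn_open_of_ae_eq h0 hEo (hcont c).continuousOn continuousOn_const
    let P : MvPolynomial (Fin d) ℝ := ∑ m : s, MvPolynomial.monomial m.1 (c m)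
    have hP : P = 0 := by
      apply MvPolynomial.funext_set (fun i => Ioo (a i) (b i)) (fun i => Ioo_infinite (hab i))
      intro x hx
      have := h1 (x := WithLp.toLp 2 x) (fun i => hx i trivial)
      simp only [P, map_sum, map_zero, MvPolynomial.eval_monomial]
      refine Eq.trans ?_ this
      refine Finset.sum_congr rfl fun m _ => ?_
      rw [Finsupp.prod_fintype _ _ (by simp)]
    funext m
    have h2 : MvPolynomial.coeff m.1 P = c m := by
      simp only [P, MvPolynomial.coeff_sum, MvPolynomial.coeff_monomial]
      rw [Finset.sum_eq_single m]
      · simp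
      · intro j _ hj
        rw [if_neg]
        exact fun h => hj (Subtype.ext h)
      · simp
    rw [← h2, hP]; simp
  obtain ⟨K, hK0, hK⟩ := T.exists_antilipschitzWith hker
  refine ⟨K, by exact_mod_cast hK0, fun c k hk => ?_⟩
  let c' : s → ℝ := fun m => c m
  have h1 := hK c' 0
  rw [map_zero, edist_zero_right, edist_zero_right] at h1
  have h2 : ‖T c'‖ₑ = ∫⁻ x in E, ENNReal.ofReal |∑ m ∈ s, c m * ∏ i, x i ^ m i| := by
    change ‖(hint c').toL1 _‖ₑ = _
    rw [Integrable.enorm_toL1]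
    refine lintegral_congr fun x => ?_
    rw [Real.enorm_eq_ofReal_abs, ← Finset.sum_coe_sort s]
  rw [h2] at h1
  have h3 : ENNReal.ofReal |c k| ≤ ‖c'‖ₑ := by
    rw [← Real.enorm_eq_ofReal_abs]
    exact enorm_le_iff_norm_le.2 (norm_le_pi_norm c' ⟨k, hk⟩)
  refine h3.trans (h1.trans (le_of_eq ?_))
  congr 1
  simp

/-- Exponents of total degree at most `n`. -/
def expSet (d n : ℕ) : Finset (Fin d →₀ ℕ) :=
  (Finset.range (n + 1)).biUnion fun m => (Finset.univ : Finset (Fin d)).finsuppAntidiag m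

theorem mem_expSet {d n : ℕ} {k : Fin d →₀ ℕ} : k ∈ expSet d n ↔ ∑ i, k i ≤ n := by
  simp [expSet]

theorem eval_expSet {d n : ℕ} (r : MvPolynomial (Fin d) ℝ) (hr : r.totalDegree ≤ n)
    (x : Fin d → ℝ) :
    MvPolynomial.eval x r = ∑ m ∈ expSet d n, r.coeff m * ∏ i, x i ^ m i := by
  rw [MvPolynomial.eval_eq']
  refine Finset.sum_subset ?_ ?_
  · intro m hm
    rw [mem_expSet]
    refine le_trans ?_ ((MvPolynomial.le_totalDegree hm).trans hr)
    rw [Finsupp.sum_fintype _ _ (by simp)]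
  · intro m _ hm
    rw [MvPolynomial.notMem_support_iff.1 hm, zero_mul]

theorem lintegral_scale {d : ℕ} (l : ℝ) (hl : 0 < l) (t : EuclideanSpace ℝ (Fin d))
    (g : EuclideanSpace ℝ (Fin d) → ℝ≥0∞) (hg : Measurable g) :
    ENNReal.ofReal (l ^ d) * ∫⁻ y, g (l • y) = ∫⁻ x, g (x - t) := by
  rw [lintegral_sub_right_eq_self g t]
  have h : ∫⁻ y, g (l • y) = ENNReal.ofReal (l ^ d)⁻¹ * ∫⁻ y, g y := by
    rw [← lintegral_map hg (measurable_const_smul l), Measure.map_addHaar_smul _ hl.ne']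
    rw [lintegral_smul_measure, finrank_euclideanSpace_fin, abs_of_pos (by positivity)]
    rfl
  rw [h, ← mul_assoc, ← ENNReal.ofReal_mul (by positivity), mul_inv_cancel₀ (by positivity)]
  simp

theorem aux_cube (d n : ℕ) :
    ∃ C : ℝ, 0 < C ∧ ∀ r : MvPolynomial (Fin d) ℝ, r.totalDegree ≤ n →
      ∀ (x₀ : EuclideanSpace ℝ (Fin d)) (l : ℝ), 0 < l → ∀ t₀ ∈ cube x₀ l,
        ∀ k : Fin d →₀ ℕ, (∑ i, k i) ≤ n →
          ENNReal.ofReal (l ^ d * |l ^ (∑ i, k i) * r.coeff k|) ≤ ENNReal.ofReal C *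
            ∫⁻ x in cube x₀ l, ENNReal.ofReal |MvPolynomial.eval (fun i => x i - t₀ i) r| := by
  have H : ∀ σ : Fin d → Bool, ∀ i, (if σ i then (0:ℝ) else -1/2) < (if σ i then (1/2:ℝ) else 0) := by
    intro σ i; split_ifs <;> norm_num
  choose C hC0 hC using fun σ : Fin d → Bool => aux_box (expSet d n) _ _ (H σ)
  refine ⟨∑ σ, C σ, Finset.sum_pos (fun σ _ => hC0 σ) Finset.univ_nonempty, ?_⟩
  intro r hr x₀ l hl t₀ ht k hk
  let σ : Fin d → Bool := fun i => decide (t₀ i ≤ x₀ i)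
  have h1 := hC σ (fun m => l ^ (∑ i, m i) * r.coeff m) k (mem_expSet.2 hk)
  set E : Set (EuclideanSpace ℝ (Fin d)) := {x | ∀ i, x i ∈
    Ioo (if σ i then (0:ℝ) else -1/2) (if σ i then (1/2:ℝ) else 0)} with hE
  have hcube : IsClosed (cube x₀ l) := by
    have : cube x₀ l = ⋂ i, {x : EuclideanSpace ℝ (Fin d) | |x i - x₀ i| ≤ l / 2} := by
      ext x; simp [cube]
    rw [this]
    exact isClosed_iInter fun i => isClosed_le (by fun_prop) continuous_const
  let g : EuclideanSpace ℝ (Fin d) → ℝ≥0∞ :=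
    ((fun z => z + t₀) ⁻¹' cube x₀ l).indicator
      fun z => ENNReal.ofReal |MvPolynomial.eval (fun i => z i) r|
  have hgm : Measurable g := by
    apply Measurable.indicator
    · have : Continuous fun z : EuclideanSpace ℝ (Fin d) =>
          MvPolynomial.eval (fun i => z i) r := by
        simp_rw [eval_expSet r hr]
        fun_prop
      exact this.abs.measurable.ennreal_ofReal
    · exact (hcube.preimage (by fun_prop)).measurableSet
  have h2 : ∫⁻ x in cube x₀ l, ENNReal.ofReal |MvPolynomial.eval (fun i => x i - t₀ i) r|
      = ∫⁻ x, g (x - t₀) := by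
    rw [← lintegral_indicator hcube.measurableSet]
    refine lintegral_congr fun x => ?_
    have hiff : x - t₀ ∈ (fun z => z + t₀) ⁻¹' cube x₀ l ↔ x ∈ cube x₀ l := by
      rw [mem_preimage, sub_add_cancel]
    by_cases hx : x ∈ cube x₀ l
    · simp only [g, indicator_of_mem hx, indicator_of_mem (hiff.2 hx)]
      rfl
    · simp only [g, indicator_of_notMem hx, indicator_of_notMem (fun h => hx (hiff.1 h))]
  have hEm : MeasurableSet E := by
    have : E = ⋂ i, (fun x : EuclideanSpace ℝ (Fin d) => x i) ⁻¹'
        Ioo (if σ i then (0:ℝ) else -1/2) (if σ i then (1/2:ℝ) else 0) := by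
      ext x; simp [hE]
    rw [this]
    exact (isOpen_iInter_of_finite fun i => isOpen_Ioo.preimage (by fun_prop)).measurableSet
  have h3 : ∫⁻ x in E, ENNReal.ofReal |∑ m ∈ expSet d n,
      (l ^ (∑ i, m i) * r.coeff m) * ∏ i, x i ^ m i| ≤ ∫⁻ y, g (l • y) := by
    rw [← lintegral_indicator hEm]
    refine lintegral_mono fun y => ?_
    by_cases hy : y ∈ E
    · have hmem : l • y ∈ (fun z => z + t₀) ⁻¹' cube x₀ l := by
        intro i
        have hyi := hy i
        have hti := abs_le.1 (ht i)
        simp only [PiLp.add_apply, PiLp.smul_apply, smul_eq_mul]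
        rw [abs_le]
        by_cases hs : t₀ i ≤ x₀ i
        · simp only [σ, hs, decide_true, if_true, mem_Ioo] at hyi
          constructor <;> nlinarith
        · simp only [σ, hs, decide_false, Bool.false_eq_true, if_false, mem_Ioo] at hyi
          push Not at hs
          constructor <;> nlinarith
      simp only [g, indicator_of_mem hy, indicator_of_mem hmem]
      rw [eval_expSet r hr]
      refine le_of_eq ?_
      congr 2
      refine Finset.sum_congr rfl fun m _ => ?_
      simp only [PiLp.smul_apply, smul_eq_mul, mul_pow, Finset.prod_mul_distrib,
        Finset.prod_pow_eq_pow_sum]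
      ring
    · simp [indicator_of_notMem hy]
  rw [h2, ← lintegral_scale l hl t₀ g hgm, ENNReal.ofReal_mul (by positivity)]
  calc _ ≤ ENNReal.ofReal (l ^ d) * (ENNReal.ofReal (C σ) * ∫⁻ y, g (l • y)) := by
        gcongr
        exact h1.trans (by gcongr)
    _ ≤ ENNReal.ofReal (l ^ d) * (ENNReal.ofReal (∑ σ, C σ) * ∫⁻ y, g (l • y)) := by
        gcongr
        exact Finset.single_le_sum (fun σ _ => (hC0 σ).le) (Finset.mem_univ σ)
    _ = _ := by ring

/-- Taylor coefficients (at a point `t₀ ∈ Q`) of near best approximation polynomials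
on `Q` and `2Q` differ by at most `C ‖f‖_{ω,ℝ^d} ω(ℓ) ℓ^{-|k|}`. -/
theorem statement_13 {d : ℕ} (n : ℕ) (ω : ℝ → ℝ) (hω : IsModulusOfOrder ω n)
    (C₀ : ℝ) (hC₀ : 0 < C₀) :
    ∃ C : ℝ, 0 < C ∧
      ∀ f : EuclideanSpace ℝ (Fin d) → ℝ,
        LocallyIntegrable f → zygSeminorm ω n Set.univ f < ⊤ →
        ∀ (x₀ : EuclideanSpace ℝ (Fin d)) (l : ℝ), 0 < l → l < 1 / 2 →
          ∀ t₀ ∈ cube x₀ l,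
            ∀ p q : MvPolynomial (Fin d) ℝ,
              p.totalDegree ≤ n → q.totalDegree ≤ n →
              IsNearBestApprox ω n Set.univ f C₀ x₀ l
                (fun x => MvPolynomial.eval (fun i => x i - t₀ i) p) →
              IsNearBestApprox ω n Set.univ f C₀ x₀ (2 * l)
                (fun x => MvPolynomial.eval (fun i => x i - t₀ i) q) →
              ∀ k : Fin d →₀ ℕ, (∑ i, k i) ≤ n →
                |MvPolynomial.coeff k q - MvPolynomial.coeff k p| ≤
                  C * (zygSeminorm ω n Set.univ f).toReal * ω l *
                    (l ^ (∑ i, k i))⁻¹ := by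
  obtain ⟨K, hK0, hK⟩ := aux_cube d n
  obtain ⟨⟨e, -, -, D, hD0, hD⟩, -⟩ := hω.conds
  refine ⟨K * (C₀ + 2 ^ d * C₀ * (D * 2 ^ e)), by positivity, ?_⟩
  intro f hf hfin x₀ l hl _ t₀ ht p q hp hq hPp hPq k hk
  set S := zygSeminorm ω n Set.univ f with hS
  have hr : (q - p).totalDegree ≤ n :=
    (MvPolynomial.totalDegree_sub q p).trans (max_le hq hp)
  have h1 := hK (q - p) hr x₀ l hl t₀ ht k hk
  have hωl := hω.nonneg l hl.le
  have hω2 : ω (2 * l) ≤ D * 2 ^ e * ω l := hD 2 l (by norm_num) hl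
  have unpack : ∀ (L : ℝ), 0 < L → ∀ I A : ℝ≥0∞,
      (ENNReal.ofReal (L ^ d))⁻¹ * I ≤ A → I ≤ ENNReal.ofReal (L ^ d) * A := by
    intro L hL I A h
    have hne : ENNReal.ofReal (L ^ d) ≠ 0 := by
      rw [Ne, ENNReal.ofReal_eq_zero, not_le]; positivity
    calc I = ENNReal.ofReal (L ^ d) * ((ENNReal.ofReal (L ^ d))⁻¹ * I) := by
          rw [← mul_assoc, ENNReal.mul_inv_cancel hne ENNReal.ofReal_ne_top, one_mul]
      _ ≤ _ := by gcongr
  have hIp := unpack l hl _ _ hPp.2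
  have hIq := unpack (2 * l) (by positivity) _ _ hPq.2
  have hsub : cube x₀ l ⊆ cube x₀ (2 * l) := by
    intro x hx i
    have := hx i
    linarith
  have hcontp : Continuous fun x : EuclideanSpace ℝ (Fin d) =>
      MvPolynomial.eval (fun i => x i - t₀ i) p := by
    simp_rw [eval_expSet p hp]
    fun_prop
  have hmeas : AEMeasurable (fun x : EuclideanSpace ℝ (Fin d) =>
      ENNReal.ofReal |f x - MvPolynomial.eval (fun i => x i - t₀ i) p|)
      (volume.restrict (cube x₀ l)) := by
    have h := (hf.aestronglyMeasurable.aemeasurable.sub hcontp.measurable.aemeasurable)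
    exact (measurable_norm.comp_aemeasurable h).ennreal_ofReal.restrict
  have h2 : ∫⁻ x in cube x₀ l,
      ENNReal.ofReal |MvPolynomial.eval (fun i => x i - t₀ i) (q - p)| ≤
      ENNReal.ofReal (l ^ d) * (ENNReal.ofReal (C₀ * ω l) * S) +
      ENNReal.ofReal ((2 * l) ^ d) * (ENNReal.ofReal (C₀ * ω (2 * l)) * S) := by
    calc _ ≤ ∫⁻ x in cube x₀ l,
          (ENNReal.ofReal |f x - MvPolynomial.eval (fun i => x i - t₀ i) p| +
          ENNReal.ofReal |f x - MvPolynomial.eval (fun i => x i - t₀ i) q|) := by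
          refine lintegral_mono fun x => ?_
          rw [← ENNReal.ofReal_add (abs_nonneg _) (abs_nonneg _), map_sub]
          apply ENNReal.ofReal_le_ofReal
          refine le_trans (le_of_eq ?_) (abs_sub _ _)
          congr 1; ring
      _ = _ := lintegral_add_left' hmeas _
      _ ≤ _ := add_le_add hIp ((lintegral_mono_set hsub).trans hIq)
  have hSr : S = ENNReal.ofReal S.toReal := (ENNReal.ofReal_toReal hfin.ne).symm
  have hS0 : 0 ≤ S.toReal := ENNReal.toReal_nonneg
  have hω2l := hω.nonneg (2 * l) (by positivity)
  have h3 := h1.trans (mul_le_mul_right h2 _)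
  rw [hSr, ← ENNReal.ofReal_mul (by positivity), ← ENNReal.ofReal_mul (by positivity),
    ← ENNReal.ofReal_mul (by positivity), ← ENNReal.ofReal_mul (by positivity),
    ← ENNReal.ofReal_add (by positivity) (by positivity), ← ENNReal.ofReal_mul hK0.le,
    ENNReal.ofReal_le_ofReal_iff (by positivity)] at h3
  rw [MvPolynomial.coeff_sub, abs_mul, abs_of_pos (by positivity : 0 < l ^ (∑ i, k i))] at h3
  rw [le_mul_inv_iff₀ (by positivity)]
  have hld : 0 < l ^ d := by positivity
  refine le_of_mul_le_mul_left ?_ hld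
  calc _ = l ^ d * (l ^ (∑ i, k i) * |MvPolynomial.coeff k q - MvPolynomial.coeff k p|) := by ring
    _ ≤ _ := h3
    _ ≤ K * (l ^ d * (C₀ * ω l * S.toReal) +
        (2 * l) ^ d * (C₀ * (D * 2 ^ e * ω l) * S.toReal)) := by gcongr
    _ = _ := by rw [mul_pow]; ring

end
end
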